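/- arXiv:2503.10824 — 5 statements merged into one kernel-verified Lean document; each statement's English description precedes it below -/
import Mathlib

section
/- For every energy-preserving quadratic matrix H ∈ ℝ^{n×n²} (i.e. xᵀH(x⊗x) = 0 for all x ∈ ℝⁿ), there exists a matrix H̃ ∈ ℝ^{n×n²}, partitioned into n blocks H̃ = [H̃_1, …, H̃_n] with each block H̃_i ∈ ℝ^{n×n} skew-symmetric (H̃_i = −H̃_iᵀ), such that H(x⊗x) = H̃(x⊗x) for all x ∈ ℝⁿ. -/
/-!
Let `f u v w = ∑ i, u i * (v ⬝ᵥ H i *ᵥ w)`. Energy preservation says that the cubic form `f x x x`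
vanishes identically, hence so does its derivative: `f v x x + f x v x + f x x v = 0`.
Symmetrizing `f u v w` in `(u, w)`, antisymmetrizing the result in `(v, w)` and dividing by `3`
gives a trilinear map `g` that is skew in its last two arguments and satisfies
`3 • g x v x = 2 • f x v x - f x x v - f v x x`, which by the derivative identity is `3 • f x v x`.
The coefficients of `g` are the blocks `H̃`.
-/

open Matrix

/-- The quadratic map `x ↦ H (x ⊗ x)` for a matrix `H ∈ ℝ^{n×n²}` partitioned into `n`
blocks `H = [H_1, …, H_n]`: `H i` is the `i`-th block and `H i j k` is the entry
`h_{i,(j,k)}`, so that the `j`-th component of `H (x ⊗ x)` is `∑_{i,k} h_{i,(j,k)} x_i x_k`. -/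
def quadMap {n : ℕ} (H : Fin n → Matrix (Fin n) (Fin n) ℝ) (x : Fin n → ℝ) : Fin n → ℝ :=
  fun j => ∑ i, ∑ k, H i j k * (x i * x k)

/-- `H` is energy-preserving if `xᵀ H (x ⊗ x) = 0` for all `x ∈ ℝⁿ`. -/
def EnergyPreserving {n : ℕ} (H : Fin n → Matrix (Fin n) (Fin n) ℝ) : Prop :=
  ∀ x : Fin n → ℝ, ∑ j, x j * quadMap H x j = 0

section Trilinear

variable {R M N : Type*} [CommRing R] [AddCommGroup M] [Module R M] [AddCommGroup N] [Module R N]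

theorem trilinear_cyclic_sum_eq_zero_of_diag_eq_zero [Invertible (2 : R)]
    {f : M →ₗ[R] M →ₗ[R] M →ₗ[R] N} (hf : ∀ x, f x x x = 0) (x v : M) :
    f v x x + f x v x + f x x v = 0 := by
  -- Twice the part of `f (x + t • v) (x + t • v) (x + t • v)` that is odd in `t`, at `t = 1`.
  have odd_part : f (x + v) (x + v) (x + v) - f (x - v) (x - v) (x - v) =
      (2 : R) • (f v x x + f x v x + f x x v) + (2 : R) • f v v v := by
    simp only [map_add, map_sub, LinearMap.add_apply, LinearMap.sub_apply]
    module
  have two_smul_sum : (2 : R) • (f v x x + f x v x + f x x v) = 0 := by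
    simpa only [hf, sub_zero, smul_zero, add_zero] using odd_part.symm
  exact (isUnit_of_invertible (2 : R)).smul_eq_zero.1 two_smul_sum

/-- The trilinear map obtained from `f u v w` by symmetrizing in `(u, w)`, then antisymmetrizing in
`(v, w)`. The factor `1 / 3` makes it agree with `f` at all `(x, v, x)` when `f` vanishes on the
diagonal. -/
def trilinearSkewPart [Invertible (3 : R)] (f : M →ₗ[R] M →ₗ[R] M →ₗ[R] N) :
    M →ₗ[R] M →ₗ[R] M →ₗ[R] N :=
  let s := f + ((LinearMap.lflip (R₀ := R)).toLinearMap ∘ₗ f.flip).flip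
  ⅟(3 : R) • (s - (LinearMap.lflip (R₀ := R)).toLinearMap ∘ₗ s)

variable [Invertible (3 : R)]

theorem trilinearSkewPart_apply (f : M →ₗ[R] M →ₗ[R] M →ₗ[R] N) (u v w : M) :
    trilinearSkewPart f u v w = ⅟(3 : R) • (f u v w + f w v u - (f u w v + f v w u)) :=
  rfl

theorem trilinearSkewPart_swap (f : M →ₗ[R] M →ₗ[R] M →ₗ[R] N) (u v w : M) :
    trilinearSkewPart f u w v = -trilinearSkewPart f u v w := by
  simp only [trilinearSkewPart_apply, ← smul_neg, neg_sub]

theorem trilinearSkewPart_apply_of_diag_eq_zero [Invertible (2 : R)]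
    {f : M →ₗ[R] M →ₗ[R] M →ₗ[R] N} (hf : ∀ x, f x x x = 0) (x v : M) :
    trilinearSkewPart f x v x = f x v x := by
  rw [trilinearSkewPart_apply, invOf_smul_eq_iff]
  calc f x v x + f x v x - (f x x v + f v x x)
      = (3 : R) • f x v x - (f v x x + f x v x + f x x v) := by module
    _ = (3 : R) • f x v x := by rw [trilinear_cyclic_sum_eq_zero_of_diag_eq_zero hf, sub_zero]

end Trilinear

section Blocks

variable {R ι : Type*} [CommRing R] [Fintype ι] [DecidableEq ι]

/-- The correspondence between block matrices `H = [H_i]` and trilinear forms on `ι → R`, under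
which `H` is the coefficient array of the form `(u, v, w) ↦ ∑ i, u i * (v ⬝ᵥ H i *ᵥ w)`. -/
noncomputable def blockTrilinearEquiv :
    (ι → Matrix ι ι R) ≃ₗ[R] ((ι → R) →ₗ[R] (ι → R) →ₗ[R] (ι → R) →ₗ[R] R) :=
  LinearEquiv.piCongrRight (fun _ => Matrix.toLinearMap₂' R (S₁ := R) (S₂ := R)) ≪≫ₗ
    (Pi.basisFun R ι).constr R

theorem blockTrilinearEquiv_apply (H : ι → Matrix ι ι R) (u v w : ι → R) :
    blockTrilinearEquiv H u v w = v ⬝ᵥ ∑ i, u i • H i *ᵥ w := by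
  simp [blockTrilinearEquiv, Module.Basis.constr_apply_fintype, Matrix.toLinearMap₂'_apply',
    dotProduct_sum]

theorem blockTrilinearEquiv_symm_apply (f : (ι → R) →ₗ[R] (ι → R) →ₗ[R] (ι → R) →ₗ[R] R)
    (i j k : ι) :
    blockTrilinearEquiv.symm f i j k = f (Pi.single i 1) (Pi.single j 1) (Pi.single k 1) := by
  obtain ⟨H, rfl⟩ := blockTrilinearEquiv.surjective f
  simp [blockTrilinearEquiv_apply]

end Blocks

theorem energy_preserving_exists_skew_representation_general {R ι : Type*} [CommRing R]
    [Invertible (2 : R)] [Invertible (3 : R)] [Fintype ι] (H : ι → Matrix ι ι R)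
    (hH : ∀ x : ι → R, x ⬝ᵥ ∑ i, x i • H i *ᵥ x = 0) :
    ∃ Ht : ι → Matrix ι ι R,
      (∀ i, (Ht i)ᵀ = -(Ht i)) ∧ ∀ x : ι → R, ∑ i, x i • H i *ᵥ x = ∑ i, x i • Ht i *ᵥ x := by
  classical
  let f := blockTrilinearEquiv H
  have f_diag (x : ι → R) : f x x x = 0 := by rw [blockTrilinearEquiv_apply, hH]
  refine ⟨blockTrilinearEquiv.symm (trilinearSkewPart f), fun i => ?_, fun x => ?_⟩
  · ext j k
    simp only [transpose_apply, Matrix.neg_apply, blockTrilinearEquiv_symm_apply]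
    exact trilinearSkewPart_swap f _ _ _
  · refine dotProduct_eq _ _ fun v => ?_
    rw [dotProduct_comm, dotProduct_comm _ v, ← blockTrilinearEquiv_apply,
      ← blockTrilinearEquiv_apply, LinearEquiv.apply_symm_apply,
      trilinearSkewPart_apply_of_diag_eq_zero f_diag]

theorem quadMap_eq_sum_smul_mulVec {n : ℕ} (H : Fin n → Matrix (Fin n) (Fin n) ℝ)
    (x : Fin n → ℝ) : quadMap H x = ∑ i, x i • H i *ᵥ x := by
  ext j
  simp [quadMap, mulVec, dotProduct, Finset.mul_sum, mul_left_comm]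

/-- Every energy-preserving quadratic matrix `H` admits an equivalent representation `H̃`
whose blocks are all skew-symmetric. -/
theorem energy_preserving_exists_skew_representation {n : ℕ}
    (H : Fin n → Matrix (Fin n) (Fin n) ℝ) (hH : EnergyPreserving H) :
    ∃ Ht : Fin n → Matrix (Fin n) (Fin n) ℝ,
      (∀ i, (Ht i)ᵀ = -(Ht i)) ∧ ∀ x : Fin n → ℝ, quadMap H x = quadMap Ht x := by
  simp only [EnergyPreserving, quadMap_eq_sum_smul_mulVec] at hH ⊢
  exact energy_preserving_exists_skew_representation_general H hH
end

section
/- Let H ∈ ℝ^{n×n²} be energy-preserving. For every choice of real numbers c(i,j,k), one for each triple of indices 1 ≤ i < j < k ≤ n, there exists a unique matrix H̃ ∈ ℝ^{n×n²} with skew-symmetric blocks H̃_i = −H̃_iᵀ such that H(x⊗x) = H̃(x⊗x) for all x ∈ ℝⁿ and such that the entry h̃_{i,(j,k)} equals c(i,j,k) for every i < j < k. In particular, n(n−1)(n−2)/6 entries of H̃ can be freely selected. -/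
/-!
By polarization, the map `x ↦ H (x ⊗ x)` amounts to the symmetrized coefficients
`S j i k = h_{i,(j,k)} + h_{k,(j,i)}`, and energy preservation gives the cyclic identity
`S i j k + S j k i + S k i j = 0`. A skew-symmetric representation is thus a solution `T` of the
linear system `T i k j = -T i j k`, `T i j k + T k j i = S j i k`. By the cyclic identity,
`T i j k = (S j i k - S k i j) / 3` is one solution. The solutions of the homogeneous system are the
totally antisymmetric tensors, which are parametrized by their entries at `i < j < k`.
-/

open Matrix

section Tensor

variable {ι M : Type*} [AddCommGroup M]

/-- The symmetrization `S j i k = T i j k + T k j i` of a tensor `T`. When the `T i` are the blocks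
of a matrix `H`, this is the coefficient of `x_i x_k` in the polarization of the `j`-th component of
`H (x ⊗ x)`; the component index comes first. -/
def symmCoeff (T : ι → Matrix ι ι M) (j i k : ι) : M :=
  T i j k + T k j i

lemma symmCoeff_comm (T : ι → Matrix ι ι M) (j i k : ι) : symmCoeff T j i k = symmCoeff T j k i :=
  add_comm _ _

lemma symmCoeff_add (T U : ι → Matrix ι ι M) : symmCoeff (T + U) = symmCoeff T + symmCoeff U := by
  ext j i k
  simp only [symmCoeff, Pi.add_apply, Matrix.add_apply]
  abel

lemma symmCoeff_sub (T U : ι → Matrix ι ι M) : symmCoeff (T - U) = symmCoeff T - symmCoeff U := by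
  ext j i k
  simp only [symmCoeff, Pi.sub_apply, Matrix.sub_apply]
  abel

/-- A tensor is totally antisymmetric if it changes sign under the exchange of its last two and of
its outer two indices; these transpositions generate all permutations of the indices. -/
structure IsTotallyAntisymm (D : ι → Matrix ι ι M) : Prop where
  swap_right : ∀ i j k, D i k j = -D i j k
  swap_outer : ∀ i j k, D k j i = -D i j k

lemma isTotallyAntisymm_iff {D : ι → Matrix ι ι M} :
    IsTotallyAntisymm D ↔ (∀ i, (D i)ᵀ = -D i) ∧ symmCoeff D = 0 := by
  have skew_iff (i : ι) : (D i)ᵀ = -D i ↔ ∀ j k, D i k j = -D i j k := Matrix.ext_iff.symm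
  have symmCoeff_iff : symmCoeff D = 0 ↔ ∀ i j k, D k j i = -D i j k := by
    simp only [funext_iff, symmCoeff, Pi.zero_apply, eq_neg_iff_add_eq_zero, add_comm]
    exact forall_comm
  simp only [skew_iff, symmCoeff_iff]
  exact ⟨fun h => ⟨h.swap_right, h.swap_outer⟩, fun h => ⟨h.1, h.2⟩⟩

namespace IsTotallyAntisymm

variable {D : ι → Matrix ι ι M}

lemma swap_left (hD : IsTotallyAntisymm D) (i j k : ι) : D j i k = -D i j k := by
  rw [hD.swap_right j k i, hD.swap_outer i k j, hD.swap_right i j k, neg_neg]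

lemma apply_self_right [IsAddTorsionFree M] (hD : IsTotallyAntisymm D) (i j : ι) : D i j j = 0 :=
  self_eq_neg.mp (hD.swap_right i j j)

lemma eq_zero_of_increasing [LinearOrder ι] [IsAddTorsionFree M] (hD : IsTotallyAntisymm D)
    (h : ∀ i j k, i < j → j < k → D i j k = 0) : D = 0 := by
  have of_lt_right {i j k : ι} (hjk : j < k) : D i j k = 0 := by
    rcases lt_trichotomy i j with hij | rfl | hji
    · exact h i j k hij hjk
    · rw [hD.swap_outer, hD.apply_self_right, neg_zero]
    · rw [hD.swap_left, neg_eq_zero]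
      rcases lt_trichotomy i k with hik | rfl | hki
      · exact h j i k hji hik
      · exact hD.apply_self_right j i
      · rw [hD.swap_right, h j k i hjk hki, neg_zero]
  ext i j k
  rcases lt_trichotomy j k with hjk | rfl | hkj
  · exact of_lt_right hjk
  · exact hD.apply_self_right i j
  · rw [hD.swap_right, of_lt_right hkj, neg_zero, Pi.zero_apply, Matrix.zero_apply]

end IsTotallyAntisymm

lemma eq_of_eq_on_increasing [LinearOrder ι] [IsAddTorsionFree M] {T U : ι → Matrix ι ι M}
    (hT : ∀ i, (T i)ᵀ = -T i) (hU : ∀ i, (U i)ᵀ = -U i) (hTU : symmCoeff T = symmCoeff U)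
    (h : ∀ i j k, i < j → j < k → T i j k = U i j k) : T = U := by
  have hD : IsTotallyAntisymm (T - U) := isTotallyAntisymm_iff.mpr
    ⟨fun i => by rw [Pi.sub_apply, transpose_sub, hT, hU, neg_sub_neg, neg_sub],
      by rw [symmCoeff_sub, hTU, sub_self]⟩
  exact sub_eq_zero.mp <| hD.eq_zero_of_increasing fun i j k hij hjk =>
    sub_eq_zero.mpr (h i j k hij hjk)

/-- The totally antisymmetric tensor with entries `d i j k` at `i < j < k`: the signed sum over all
permutations of the indices of the restriction of `d` to strictly increasing triples. -/
def antisymmetrize [LinearOrder ι] (d : ι → ι → ι → M) : ι → Matrix ι ι M :=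
  let g : ι → ι → ι → M := fun i j k => if i < j ∧ j < k then d i j k else 0
  fun i => Matrix.of fun j k => g i j k - g i k j + g j k i - g j i k + g k i j - g k j i

lemma isTotallyAntisymm_antisymmetrize [LinearOrder ι] (d : ι → ι → ι → M) :
    IsTotallyAntisymm (antisymmetrize d) where
  swap_right i j k := by
    simp only [antisymmetrize, Matrix.of_apply]
    abel
  swap_outer i j k := by
    simp only [antisymmetrize, Matrix.of_apply]
    abel

lemma antisymmetrize_of_increasing [LinearOrder ι] (d : ι → ι → ι → M) {i j k : ι}
    (hij : i < j) (hjk : j < k) : antisymmetrize d i j k = d i j k := by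
  simp [antisymmetrize, hij, hjk, hij.not_gt, hjk.not_gt, (hij.trans hjk).not_gt]

section RatModule

variable [Module ℚ M]

/-- The solution `T` of `symmCoeff T = S` with skew-symmetric blocks and no totally antisymmetric
part, for `S` symmetric in its last two indices and with vanishing cyclic sums. -/
def skewLift (S : ι → ι → ι → M) : ι → Matrix ι ι M :=
  fun i => Matrix.of fun j k => (3⁻¹ : ℚ) • (S j i k - S k i j)

lemma transpose_skewLift (S : ι → ι → ι → M) (i : ι) : (skewLift S i)ᵀ = -skewLift S i := by
  ext j k
  simp only [skewLift, Matrix.transpose_apply, Matrix.neg_apply, Matrix.of_apply, ← smul_neg,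
    neg_sub]

lemma symmCoeff_skewLift {S : ι → ι → ι → M} (hcomm : ∀ j i k, S j i k = S j k i)
    (hcyclic : ∀ i j k, S i j k + S j k i + S k i j = 0) : symmCoeff (skewLift S) = S := by
  ext j i k
  simp only [symmCoeff, skewLift, Matrix.of_apply]
  rw [hcomm j k i, hcomm k i j]
  linear_combination (norm := module) (-3⁻¹ : ℚ) • hcyclic j i k

theorem existsUnique_skew_symmCoeff_eq_of_cyclic [LinearOrder ι] {S : ι → ι → ι → M}
    (hcomm : ∀ j i k, S j i k = S j k i) (hcyclic : ∀ i j k, S i j k + S j k i + S k i j = 0)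
    (c : ι → ι → ι → M) :
    ∃! T : ι → Matrix ι ι M, (∀ i, (T i)ᵀ = -T i) ∧ symmCoeff T = S ∧
      ∀ i j k, i < j → j < k → T i j k = c i j k := by
  have : IsAddTorsionFree M := .of_module_rat M
  let d : ι → ι → ι → M := fun i j k => c i j k - skewLift S i j k
  obtain ⟨hskew, hsymm⟩ := isTotallyAntisymm_iff.mp (isTotallyAntisymm_antisymmetrize d)
  refine existsUnique_of_exists_of_unique
    ⟨skewLift S + antisymmetrize d, fun i => ?_, ?_, fun i j k hij hjk => ?_⟩
    fun T U ⟨hT, hTS, hTc⟩ ⟨hU, hUS, hUc⟩ =>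
      eq_of_eq_on_increasing hT hU (hTS.trans hUS.symm) fun i j k hij hjk =>
        (hTc i j k hij hjk).trans (hUc i j k hij hjk).symm
  · rw [Pi.add_apply, transpose_add, transpose_skewLift, hskew, neg_add]
  · rw [symmCoeff_add, symmCoeff_skewLift hcomm hcyclic, hsymm, add_zero]
  · rw [Pi.add_apply, Matrix.add_apply, antisymmetrize_of_increasing d hij hjk, add_sub_cancel]

end RatModule

end Tensor

section Polarization

open QuadraticMap (polar)

lemma dotProduct_polar_cyclic {m R : Type*} [Fintype m] [CommRing R]
    {Q : QuadraticMap R (m → R) (m → R)} (hQ : ∀ x, x ⬝ᵥ Q x = 0) (x y z : m → R) :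
    x ⬝ᵥ polar Q y z + y ⬝ᵥ polar Q z x + z ⬝ᵥ polar Q x y = 0 := by
  have hQ_add (x y : m → R) : x ⬝ᵥ Q y + y ⬝ᵥ Q x + (x + y) ⬝ᵥ polar Q x y = 0 := by
    have h := hQ (x + y)
    rw [QuadraticMap.map_add Q] at h
    simp only [add_dotProduct, dotProduct_add, hQ] at h ⊢
    linear_combination h
  have h := hQ_add (x + y) z
  simp only [QuadraticMap.map_add Q x y, QuadraticMap.polar_add_left, add_dotProduct,
    dotProduct_add] at h
  rw [QuadraticMap.polar_comm Q z x]
  have hxz := hQ_add x z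
  have hyz := hQ_add y z
  simp only [add_dotProduct] at hxz hyz
  linear_combination h - hxz - hyz

variable {n : ℕ}

lemma polar_quadMap (H : Fin n → Matrix (Fin n) (Fin n) ℝ) (x y : Fin n → ℝ) (j : Fin n) :
    polar (quadMap H) x y j = ∑ i, ∑ k, symmCoeff H j i k * (x i * y k) := by
  have swap : ∑ i, ∑ k, H k j i * (x i * y k) = ∑ i, ∑ k, H i j k * (y i * x k) := by
    rw [Finset.sum_comm]
    simp only [mul_comm]
  simp only [polar, quadMap, symmCoeff, Pi.sub_apply, Pi.add_apply, add_mul, mul_add,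
    Finset.sum_add_distrib, swap]
  ring

lemma polar_quadMap_single (H : Fin n → Matrix (Fin n) (Fin n) ℝ) (j i k : Fin n) :
    polar (quadMap H) (Pi.single i 1) (Pi.single k 1) j = symmCoeff H j i k := by
  simp [polar_quadMap, Pi.single_apply]

/-- The map `x ↦ H (x ⊗ x)` as a bundled quadratic map, giving access to Mathlib's calculus of polar
forms. -/
def quadraticMapOfBlocks (H : Fin n → Matrix (Fin n) (Fin n) ℝ) :
    QuadraticMap ℝ (Fin n → ℝ) (Fin n → ℝ) :=
  QuadraticMap.ofPolar (quadMap H)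
    (fun a x => by
      ext j
      simp only [quadMap, Pi.smul_apply, smul_eq_mul, Finset.mul_sum]
      congr! 2
      ring)
    (fun x x' y => by
      ext j
      simp only [polar_quadMap, Pi.add_apply, add_mul, mul_add, Finset.sum_add_distrib])
    (fun a x y => by
      ext j
      simp only [polar_quadMap, Pi.smul_apply, smul_eq_mul, Finset.mul_sum]
      congr! 2
      ring)

lemma coe_quadraticMapOfBlocks (H : Fin n → Matrix (Fin n) (Fin n) ℝ) :
    ⇑(quadraticMapOfBlocks H) = quadMap H :=
  rfl

lemma quadMap_eq_iff_symmCoeff_eq {H K : Fin n → Matrix (Fin n) (Fin n) ℝ} :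
    quadMap H = quadMap K ↔ symmCoeff H = symmCoeff K := by
  refine ⟨fun h => ?_, fun h => ?_⟩
  · ext j i k
    rw [← polar_quadMap_single, ← polar_quadMap_single, h]
  · have hpolar (x : Fin n → ℝ) : polar (quadMap H) x x = polar (quadMap K) x x := by
      ext j
      simp only [polar_quadMap, h]
    have two_smul_eq_polar (L : Fin n → Matrix (Fin n) (Fin n) ℝ) (x : Fin n → ℝ) :
        2 • quadMap L x = polar (quadMap L) x x :=
      ((quadraticMapOfBlocks L).polar_self x).symm
    funext x
    exact nsmul_right_injective two_ne_zero <|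
      (two_smul_eq_polar H x).trans <| (hpolar x).trans (two_smul_eq_polar K x).symm

lemma EnergyPreserving.symmCoeff_cyclic {H : Fin n → Matrix (Fin n) (Fin n) ℝ}
    (hH : EnergyPreserving H) (i j k : Fin n) :
    symmCoeff H i j k + symmCoeff H j k i + symmCoeff H k i j = 0 := by
  have h := dotProduct_polar_cyclic (Q := quadraticMapOfBlocks H) hH
    (Pi.single i 1) (Pi.single j 1) (Pi.single k 1)
  simpa only [single_one_dotProduct, coe_quadraticMapOfBlocks, polar_quadMap_single] using h

end Polarization

/-- Given an energy-preserving `H` and an arbitrary choice of values `c i j k` for the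
entries with `i < j < k`, there is a unique equivalent `H̃` with skew-symmetric blocks
realizing those entries: `n(n−1)(n−2)/6` entries of `H̃` can be freely selected. -/
theorem energy_preserving_skew_representation_unique_given_free_entries {n : ℕ}
    (H : Fin n → Matrix (Fin n) (Fin n) ℝ) (hH : EnergyPreserving H)
    (c : Fin n → Fin n → Fin n → ℝ) :
    ∃! Ht : Fin n → Matrix (Fin n) (Fin n) ℝ,
      (∀ i, (Ht i)ᵀ = -(Ht i)) ∧
      (∀ x : Fin n → ℝ, quadMap H x = quadMap Ht x) ∧
      (∀ i j k : Fin n, i < j → j < k → Ht i j k = c i j k) := by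
  simp only [← funext_iff (f := quadMap H), quadMap_eq_iff_symmCoeff_eq,
    eq_comm (a := symmCoeff H)]
  exact existsUnique_skew_symmCoeff_eq_of_cyclic (symmCoeff_comm H) hH.symmCoeff_cyclic c
end

section
/- Let H ∈ ℝ^{n×n²} be energy-preserving and let H̃ ∈ ℝ^{n×n²} have skew-symmetric blocks H̃_i = −H̃_iᵀ and satisfy H(x⊗x) = H̃(x⊗x) for all x ∈ ℝⁿ. Then for all distinct indices i ≠ k one has h̃_{k,(k,i)} = −h_{k,(i,k)}. -/
open Matrix

section General

variable {ι R : Type*} [Fintype ι]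

lemma sum_sum_mul_single_mul_single [DecidableEq ι] [NonAssocSemiring R] {κ : Type*}
    (H : ι → Matrix κ ι R) (j : κ) (k : ι) :
    ∑ i, ∑ l, H i j l * ((Pi.single k 1 : ι → R) i * (Pi.single k 1 : ι → R) l) = H k j k := by
  simp [Pi.single_apply]

theorem skew_representation_determined_entries_general [NonAssocRing R]
    (H Ht : ι → Matrix ι ι R) (k : ι) (hskew : (Ht k)ᵀ = -(Ht k))
    (hequiv : ∀ (x : ι → R) (j : ι),
      ∑ i, ∑ l, H i j l * (x i * x l) = ∑ i, ∑ l, Ht i j l * (x i * x l)) (i : ι) :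
    Ht k k i = -(H k i k) := by
  classical
  -- Both sides are the coefficient of `x_k ^ 2`, to which no other pair of entries contributes.
  have hcoeff : H k i k = Ht k i k := by
    simpa only [sum_sum_mul_single_mul_single] using hequiv (Pi.single k 1) i
  calc
    Ht k k i = (Ht k)ᵀ i k := (transpose_apply (Ht k) i k).symm
    _ = -(Ht k i k) := by rw [hskew, neg_apply]
    _ = -(H k i k) := by rw [hcoeff]

end General

/-- For an energy-preserving `H` and an equivalent `H̃` with skew-symmetric blocks, the
entries `h̃_{k,(k,i)}` for `i ≠ k` are determined: `h̃_{k,(k,i)} = −h_{k,(i,k)}`. -/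
theorem skew_representation_determined_entries {n : ℕ}
    (H Ht : Fin n → Matrix (Fin n) (Fin n) ℝ)
    (hH : EnergyPreserving H)
    (hskew : ∀ i, (Ht i)ᵀ = -(Ht i))
    (hequiv : ∀ x : Fin n → ℝ, quadMap H x = quadMap Ht x) :
    ∀ i k : Fin n, i ≠ k → Ht k k i = -(H k i k) :=
  fun i k _ ↦ skew_representation_determined_entries_general H Ht k (hskew k)
    (fun x ↦ congrFun (hequiv x)) i
end

section
/- For every energy-preserving matrix H ∈ ℝ^{n×n²} there exists a matrix H̃ ∈ ℝ^{n×n²} satisfying the row-wise skew-symmetry condition h̃_{i,(k,j)} = −h̃_{k,(i,j)} for all i, j, k ∈ {1, …, n}, such that H(x⊗x) = H̃(x⊗x) for all x ∈ ℝⁿ. -/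
/-!
View the entries `h_{i,(j,k)}` as the coefficients of a trilinear form `f`, so that
`f x e_j x` is the `j`-th component of `H (x ⊗ x)` and `f x x x` is the energy `xᵀ H (x ⊗ x)`.
Skew-symmetrizing `f a b c + f c b a` in `a, b` and dividing by `3` gives a form `g` with
`3 g x y x = 2 f x y x - f y x x - f x x y`. If the cubic form `f x x x` vanishes, so does its
derivative `f y x x + f x y x + f x x y` in the direction `y`, whence `g x y x = f x y x`.
-/

section SwapOuter

variable {R E F G M : Type*} [CommSemiring R] [AddCommMonoid E] [Module R E] [AddCommMonoid F]
  [Module R F] [AddCommMonoid G] [Module R G] [AddCommMonoid M] [Module R M]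

/-- The trilinear map `(a, b, c) ↦ f c b a`, used to symmetrize `f` in its outer arguments. -/
def trilinearSwapOuter (f : E →ₗ[R] F →ₗ[R] G →ₗ[R] M) : G →ₗ[R] F →ₗ[R] E →ₗ[R] M :=
  (LinearMap.lflip.toLinearMap ∘ₗ f.flip).flip

theorem trilinearSwapOuter_apply (f : E →ₗ[R] F →ₗ[R] G →ₗ[R] M) (a : G) (b : F) (c : E) :
    trilinearSwapOuter f a b c = f c b a :=
  rfl

end SwapOuter

section Skew

variable {R E M : Type*} [CommRing R] [AddCommGroup E] [Module R E] [AddCommGroup M] [Module R M]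

theorem trilinear_deriv_diag_eq_zero (h2 : IsSMulRegular M (2 : R))
    {f : E →ₗ[R] E →ₗ[R] E →ₗ[R] M} (hf : ∀ x, f x x x = 0) (x y : E) :
    f y x x + f x y x + f x x y = 0 := by
  refine h2.right_eq_zero_of_smul ?_
  -- Antisymmetrizing in `y` kills the terms of even degree in `y`; of the odd ones, the cubic
  -- term `f y y y` vanishes by assumption.
  calc (2 : R) • (f y x x + f x y x + f x x y)
      = f (x + y) (x + y) (x + y) - f (x - y) (x - y) (x - y) - (2 : R) • f y y y := by
        simp only [map_add, map_sub, LinearMap.add_apply, LinearMap.sub_apply]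
        module
    _ = 0 := by simp only [hf, smul_zero, sub_zero]

theorem exists_flip_eq_neg_and_apply_outer_self_eq [Invertible (3 : R)]
    (h2 : IsSMulRegular M (2 : R)) {f : E →ₗ[R] E →ₗ[R] E →ₗ[R] M} (hf : ∀ x, f x x x = 0) :
    ∃ g : E →ₗ[R] E →ₗ[R] E →ₗ[R] M, g.flip = -g ∧ ∀ x y, g x y x = f x y x := by
  let s := f + trilinearSwapOuter f
  refine ⟨⅟(3 : R) • (s - s.flip), ?_, fun x y => ?_⟩
  · ext a b c
    simp only [LinearMap.flip_apply, LinearMap.smul_apply, LinearMap.sub_apply,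
      LinearMap.neg_apply]
    module
  · have hderiv := trilinear_deriv_diag_eq_zero h2 hf x y
    calc (⅟(3 : R) • (s - s.flip)) x y x
        = ⅟(3 : R) • ((3 : R) • f x y x - (f y x x + f x y x + f x x y)) := by
          simp only [s, LinearMap.smul_apply, LinearMap.sub_apply, LinearMap.add_apply,
            LinearMap.flip_apply, trilinearSwapOuter_apply]
          module
      _ = f x y x := by rw [hderiv, sub_zero, invOf_smul_smul]

end Skew

section Coordinates

variable {ι m κ R : Type*} [Fintype ι] [Fintype m] [Fintype κ] [DecidableEq m]
  [DecidableEq κ] [CommSemiring R]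

theorem trilinear_apply_outer_eq_sum [DecidableEq ι] {E M : Type*} [AddCommMonoid E] [Module R E]
    [AddCommMonoid M] [Module R M] (f : (ι → R) →ₗ[R] E →ₗ[R] (κ → R) →ₗ[R] M)
    (x : ι → R) (y : E) (z : κ → R) :
    f x y z = ∑ i, ∑ k, (x i * z k) • f (Pi.single i 1) y (Pi.single k 1) := by
  calc f x y z
      = Matrix.toLinearMap₂' R (LinearMap.toMatrix₂' R (f.flip y)) x z := by
        rw [Matrix.toLinearMap₂'_toMatrix', LinearMap.flip_apply]
    _ = ∑ i, ∑ k, (x i * z k) • f (Pi.single i 1) y (Pi.single k 1) := by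
        simp only [Matrix.toLinearMap₂'_apply, LinearMap.toMatrix₂'_apply, LinearMap.flip_apply,
          mul_smul]

/-- The trilinear form with coefficients `H i j k`, the `(j, k)` entry of the `i`-th block being
paired with the `i`-th, `j`-th and `k`-th coordinates of the three arguments. -/
def blockTrilinForm (H : ι → Matrix m κ R) :
    (ι → R) →ₗ[R] (m → R) →ₗ[R] (κ → R) →ₗ[R] R :=
  Fintype.linearCombination R fun i => Matrix.toLinearMap₂' R (H i)

theorem blockTrilinForm_single [DecidableEq ι] (H : ι → Matrix m κ R) (i : ι) (j : m) (k : κ) :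
    blockTrilinForm H (Pi.single i 1) (Pi.single j 1) (Pi.single k 1) = H i j k := by
  rw [blockTrilinForm, Fintype.linearCombination_apply_single, one_smul,
    Matrix.toLinearMap₂'_apply', single_one_dotProduct, Matrix.mulVec_single_one,
    Matrix.col_apply]

theorem blockTrilinForm_apply_single_mid (H : ι → Matrix m κ R) (x : ι → R) (j : m)
    (z : κ → R) :
    blockTrilinForm H x (Pi.single j 1) z = ∑ i, ∑ k, H i j k * (x i * z k) := by
  classical
  simp only [trilinear_apply_outer_eq_sum _ x, blockTrilinForm_single, smul_eq_mul, mul_comm]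

theorem blockTrilinForm_apply_eq_sum_mid (H : ι → Matrix m κ R) (x : ι → R) (y : m → R)
    (z : κ → R) :
    blockTrilinForm H x y z = ∑ j, y j * ∑ i, ∑ k, H i j k * (x i * z k) := by
  calc blockTrilinForm H x y z
      = ∑ j, y j * blockTrilinForm H x (Pi.single j 1) z := by
        conv_lhs => rw [pi_eq_sum_univ' y]
        simp only [map_sum, map_smul, LinearMap.sum_apply, LinearMap.smul_apply, smul_eq_mul]
    _ = ∑ j, y j * ∑ i, ∑ k, H i j k * (x i * z k) := by
        simp only [blockTrilinForm_apply_single_mid]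

end Coordinates

theorem energy_preserving_exists_rowwise_skew_representation_general {ι R : Type*} [Fintype ι]
    [CommRing R] [Invertible (3 : R)] (h2 : IsSMulRegular R (2 : R)) (H : ι → Matrix ι ι R)
    (hH : ∀ x : ι → R, ∑ j, x j * ∑ i, ∑ k, H i j k * (x i * x k) = 0) :
    ∃ Ht : ι → Matrix ι ι R, (∀ i j k, Ht i k j = -(Ht k i j)) ∧
      ∀ (x : ι → R) (j : ι),
        ∑ i, ∑ k, H i j k * (x i * x k) = ∑ i, ∑ k, Ht i j k * (x i * x k) := by
  classical
  have hdiag (x : ι → R) : blockTrilinForm H x x x = 0 :=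
    (blockTrilinForm_apply_eq_sum_mid H x x x).trans (hH x)
  obtain ⟨g, hskew, hg⟩ := exists_flip_eq_neg_and_apply_outer_self_eq h2 hdiag
  refine ⟨fun i => Matrix.of fun j k => g (Pi.single i 1) (Pi.single j 1) (Pi.single k 1),
    fun i j k => ?_, fun x j => ?_⟩
  · exact LinearMap.congr_fun (LinearMap.congr_fun₂ hskew _ _) _
  · calc ∑ i, ∑ k, H i j k * (x i * x k)
        = blockTrilinForm H x (Pi.single j 1) x := (blockTrilinForm_apply_single_mid H x j x).symm
      _ = g x (Pi.single j 1) x := (hg x (Pi.single j 1)).symm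
      _ = ∑ i, ∑ k, g (Pi.single i 1) (Pi.single j 1) (Pi.single k 1) * (x i * x k) := by
          simp only [trilinear_apply_outer_eq_sum g x, smul_eq_mul, mul_comm]

/-- Every energy-preserving `H` admits an equivalent representation `H̃` satisfying the
row-wise skew-symmetry condition `h̃_{i,(k,j)} = −h̃_{k,(i,j)}`. -/
theorem energy_preserving_exists_rowwise_skew_representation {n : ℕ}
    (H : Fin n → Matrix (Fin n) (Fin n) ℝ) (hH : EnergyPreserving H) :
    ∃ Ht : Fin n → Matrix (Fin n) (Fin n) ℝ,
      (∀ i j k : Fin n, Ht i k j = -(Ht k i j)) ∧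
      ∀ x : Fin n → ℝ, quadMap H x = quadMap Ht x := by
  obtain ⟨Ht, hskew, hquad⟩ :=
    energy_preserving_exists_rowwise_skew_representation_general (.of_ne_zero two_ne_zero) H hH
  exact ⟨Ht, hskew, fun x => funext (hquad x)⟩
end

section
/- If H ∈ ℝ^{n×n²} is energy-preserving, then h_{i,(i,i)} = 0 for every i ∈ {1, …, n}, and for all distinct indices i ≠ k one has h_{i,(k,k)} + h_{k,(i,k)} + h_{k,(k,i)} = 0. -/
section Polarization

variable {R M N : Type*} [CommSemiring R] [AddCommGroup M] [Module R M]
  [AddCommGroup N] [Module R N]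

lemma trilinear_diag_add_add_diag_sub (T : M →ₗ[R] M →ₗ[R] M →ₗ[R] N) (x y : M) :
    T (x + y) (x + y) (x + y) + T (x - y) (x - y) (x - y) =
      (2 : R) • (T x x x + (T x y y + T y x y + T y y x)) := by
  simp only [map_add, map_sub, LinearMap.add_apply, LinearMap.sub_apply, two_smul]
  abel

lemma trilinear_polar_eq_zero_of_diag_eq_zero (h2 : IsSMulRegular N (2 : R))
    {T : M →ₗ[R] M →ₗ[R] M →ₗ[R] N} (hT : ∀ x, T x x x = 0) (x y : M) :
    T x y y + T y x y + T y y x = 0 := by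
  have h := trilinear_diag_add_add_diag_sub T x y
  simp only [hT, zero_add] at h
  exact h2.right_eq_zero_of_smul h.symm

end Polarization

section EnergyForm

variable {R ι : Type*} [CommSemiring R] [Fintype ι] [DecidableEq ι]

/-- The trilinear form `T(x, y, z) = ∑ h_{i,(j,k)} x_i y_j z_k` of a block matrix
`H = [H_1, …, H_n]`, whose diagonal `T(x, x, x)` is the energy `xᵀ H (x ⊗ x)`. The arguments come in
the order of the indices of `H i j k`, so the left factor `xᵀ` sits in the second slot. -/
def energyForm (H : ι → Matrix ι ι R) : (ι → R) →ₗ[R] (ι → R) →ₗ[R] (ι → R) →ₗ[R] R :=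
  ∑ i, (LinearMap.proj i).smulRight (Matrix.toLinearMap₂' R (H i))

lemma energyForm_apply (H : ι → Matrix ι ι R) (x y z : ι → R) :
    energyForm H x y z = ∑ i, x i * ∑ j, ∑ k, y j * z k * H i j k := by
  simp [energyForm, LinearMap.sum_apply, Matrix.toLinearMap₂'_apply, mul_assoc]

lemma energyForm_self (H : ι → Matrix ι ι R) (x : ι → R) :
    energyForm H x x x = ∑ j, x j * ∑ i, ∑ k, H i j k * (x i * x k) := by
  simp only [energyForm_apply, Finset.mul_sum]
  rw [Finset.sum_comm]
  refine Finset.sum_congr rfl fun j _ ↦ Finset.sum_congr rfl fun i _ ↦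
    Finset.sum_congr rfl fun k _ ↦ ?_
  ring

lemma energyForm_single_one (H : ι → Matrix ι ι R) (i j k : ι) :
    energyForm H (Pi.single i 1) (Pi.single j 1) (Pi.single k 1) = H i j k := by
  simp [energyForm_apply, Pi.single_apply]

end EnergyForm

theorem energy_preserving_diagonal_conditions_general {R ι : Type*} [CommRing R] [Fintype ι]
    (h2 : IsLeftRegular (2 : R)) (H : ι → Matrix ι ι R)
    (hH : ∀ x : ι → R, ∑ j, x j * ∑ i, ∑ k, H i j k * (x i * x k) = 0) :
    (∀ i, H i i i = 0) ∧ ∀ i k, H i k k + H k i k + H k k i = 0 := by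
  classical
  have hdiag (x : ι → R) : energyForm H x x x = 0 := (energyForm_self H x).trans (hH x)
  refine ⟨fun i ↦ ?_, fun i k ↦ ?_⟩
  · simpa only [energyForm_single_one] using hdiag (Pi.single i 1)
  · simpa only [energyForm_single_one] using
      trilinear_polar_eq_zero_of_diag_eq_zero h2.isSMulRegular hdiag (Pi.single i 1) (Pi.single k 1)

/-- For energy-preserving `H`: the totally diagonal entries vanish, and for `i ≠ k` one has
`h_{i,(k,k)} + h_{k,(i,k)} + h_{k,(k,i)} = 0`. -/
theorem energy_preserving_diagonal_conditions {n : ℕ}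
    (H : Fin n → Matrix (Fin n) (Fin n) ℝ) (hH : EnergyPreserving H) :
    (∀ i : Fin n, H i i i = 0) ∧
    (∀ i k : Fin n, i ≠ k → H i k k + H k i k + H k k i = 0) := by
  obtain ⟨hdiag, hmixed⟩ :=
    energy_preserving_diagonal_conditions_general (IsRegular.of_ne_zero two_ne_zero).left H hH
  exact ⟨hdiag, fun i k _ ↦ hmixed i k⟩
end
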